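/- Let S be a neighborly combinatorial surface on the vertex set Fin n with n ≥ 4, and let χ denote its Euler characteristic. Then 6·χ = n·(7 − n); in particular 6 divides n·(7 − n), so n mod 6 ∈ {0, 1, 3, 4}. -/

import Mathlib

open Finset

section Defs

variable {α : Type*} [DecidableEq α]

/-- The 1-skeleton graph of a set of faces: two vertices are adjacent
if they lie together in a common face of `S`. -/
def skeletonGraph (S : Finset (Finset α)) : SimpleGraph α where
  Adj a b := a ≠ b ∧ ∃ T ∈ S, a ∈ T ∧ b ∈ T
  symm := by
    refine ⟨?_⟩
    rintro a b ⟨hab, T, hT, ha, hb⟩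
    exact ⟨hab.symm, T, hT, hb, ha⟩
  loopless := by refine ⟨?_⟩; rintro a ⟨h, -⟩; exact h rfl

/-- The link graph of a vertex `v`: `a` and `b` are adjacent
if `{v, a, b}` is a triangle of `S`. -/
def linkGraph (S : Finset (Finset α)) (v : α) : SimpleGraph α where
  Adj a b := a ≠ b ∧ ({v, a, b} : Finset α) ∈ S
  symm := by
    refine ⟨?_⟩
    rintro a b ⟨hab, h⟩
    refine ⟨hab.symm, ?_⟩
    rwa [Finset.pair_comm b a]
  loopless := by refine ⟨?_⟩; rintro a ⟨h, -⟩; exact h rfl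

/-- The set of neighbors of the vertex `v` in `S`. -/
def nbrSet (S : Finset (Finset α)) (v : α) : Set α :=
  {a | a ≠ v ∧ ∃ T ∈ S, v ∈ T ∧ a ∈ T}

/-- The edges of `S`: the 2-element subsets of `V` contained in some face of `S`. -/
def edgesOn (V : Finset α) (S : Finset (Finset α)) : Finset (Finset α) :=
  V.powerset.filter fun e => e.card = 2 ∧ ∃ T ∈ S, e ⊆ T

/-- `S` is a combinatorial surface on the vertex set `V`: all faces are triangles
on `V`, every vertex of `V` lies in a triangle, every edge lies in exactly two
triangles, the link graph of every vertex (induced on the neighbors of the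
vertex) is connected, and the 1-skeleton (induced on `V`) is connected. -/
def IsCombSurfaceOn (V : Finset α) (S : Finset (Finset α)) : Prop :=
  (∀ T ∈ S, T.card = 3 ∧ T ⊆ V) ∧
  (∀ v ∈ V, ∃ T ∈ S, v ∈ T) ∧
  (∀ e : Finset α, e.card = 2 → (∃ T ∈ S, e ⊆ T) →
    (S.filter fun T => e ⊆ T).card = 2) ∧
  (∀ v ∈ V, ((linkGraph S v).induce (nbrSet S v)).Connected) ∧
  ((skeletonGraph S).induce (V : Set α)).Connected

/-- The Euler characteristic `χ = |V| - f₁ + f₂` of `S` on the vertex set `V`. -/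
def eulerCharOn (V : Finset α) (S : Finset (Finset α)) : ℤ :=
  (V.card : ℤ) - ((edgesOn V S).card : ℤ) + (S.card : ℤ)

/-- `S` is equivelar (degree-regular): all vertices of `V` lie in the same
number `q` of triangles. -/
def IsEquivelarOn (V : Finset α) (S : Finset (Finset α)) : Prop :=
  ∃ q : ℕ, ∀ v ∈ V, (S.filter fun T => v ∈ T).card = q

/-- The directed edges of the cyclic ordering given by an ordered triple. -/
def dirEdges (t : α × α × α) : Finset (α × α) :=
  {(t.1, t.2.1), (t.2.1, t.2.2), (t.2.2, t.1)}

/-- `S` is orientable: one can choose a cyclic ordering of each triangle so that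
for every edge `{a, b}` lying in two triangles, the two chosen cyclic orderings
traverse the edge in opposite directions. -/
def IsOrientable (S : Finset (Finset α)) : Prop :=
  ∃ o : Finset α → α × α × α,
    (∀ T ∈ S, ({(o T).1, (o T).2.1, (o T).2.2} : Finset α) = T) ∧
    (∀ T ∈ S, ∀ T' ∈ S, T ≠ T' → ∀ x y : α,
      (x, y) ∈ dirEdges (o T) → ({x, y} : Finset α) ⊆ T' →
      (y, x) ∈ dirEdges (o T'))

/-- The link of a vertex `v` in a 3-dimensional complex `S`:
the triangles `{a,b,c}` with `{v,a,b,c} ∈ S`. -/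
def linkOf (S : Finset (Finset α)) (v : α) : Finset (Finset α) :=
  (S.filter fun T => v ∈ T).image fun T => T.erase v

end Defs

/-- `S` is a combinatorial surface on the vertex set `Fin n`. -/
def IsCombSurface (n : ℕ) (S : Finset (Finset (Fin n))) : Prop :=
  IsCombSurfaceOn Finset.univ S

/-- The Euler characteristic of a complex on the vertex set `Fin n`. -/
def eulerChar (n : ℕ) (S : Finset (Finset (Fin n))) : ℤ :=
  eulerCharOn Finset.univ S

/-- `S` is equivelar on `Fin n`. -/
def IsEquivelar (n : ℕ) (S : Finset (Finset (Fin n))) : Prop :=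
  IsEquivelarOn Finset.univ S

/-- `S` is neighborly: every 2-element subset of `Fin n` is an edge. -/
def IsNeighborly (n : ℕ) (S : Finset (Finset (Fin n))) : Prop :=
  ∀ e : Finset (Fin n), e.card = 2 → ∃ T ∈ S, e ⊆ T

/-- Two labeled complexes on `Fin n` are isomorphic if a permutation of the
vertices maps the faces of one onto the faces of the other. -/
def IsoComplex (n : ℕ) (S S' : Finset (Finset (Fin n))) : Prop :=
  ∃ σ : Equiv.Perm (Fin n), S.image (fun T => T.image σ) = S'

/-- The number of isomorphism classes (orbits under the symmetric group)
of complexes on `Fin n` satisfying `P`. -/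
noncomputable def numClasses (n : ℕ) (P : Finset (Finset (Fin n)) → Prop) : ℕ :=
  Nat.card (Quot fun A B : {S : Finset (Finset (Fin n)) // P S} => IsoComplex n A.1 B.1)

/-- The neighbors of a vertex `v` in a complex `S` on `Fin n`. -/
def vertexNbrs (n : ℕ) (S : Finset (Finset (Fin n))) (v : Fin n) : Finset (Fin n) :=
  Finset.univ.filter fun a => a ≠ v ∧ ∃ T ∈ S, v ∈ T ∧ a ∈ T

/-- `S` is a combinatorial 3-manifold on the vertex set `Fin n`: all faces are
tetrahedra, every vertex lies in a tetrahedron, every triangle contained in a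
tetrahedron lies in exactly two tetrahedra, the link of every vertex is a
combinatorial surface (on the neighbors of the vertex) with Euler
characteristic 2, and the 1-skeleton is connected. -/
def IsComb3Manifold (n : ℕ) (S : Finset (Finset (Fin n))) : Prop :=
  (∀ T ∈ S, T.card = 4) ∧
  (∀ v : Fin n, ∃ T ∈ S, v ∈ T) ∧
  (∀ F : Finset (Fin n), F.card = 3 → (∃ T ∈ S, F ⊆ T) →
    (S.filter fun T => F ⊆ T).card = 2) ∧
  (∀ v : Fin n, IsCombSurfaceOn (vertexNbrs n S v) (linkOf S v) ∧
    eulerCharOn (vertexNbrs n S v) (linkOf S v) = 2) ∧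
  (skeletonGraph S).Connected

/-- For a neighborly combinatorial surface on `Fin n`, `n ≥ 4`:
`6·χ = n·(7 - n)`; in particular `6 ∣ n·(7 - n)`, so `n mod 6 ∈ {0,1,3,4}`. -/
theorem neighborly_euler_char (n : ℕ) (hn : 4 ≤ n) (S : Finset (Finset (Fin n)))
    (hS : IsCombSurface n S) (hnb : IsNeighborly n S) :
    6 * eulerChar n S = (n : ℤ) * (7 - (n : ℤ)) ∧
    (6 : ℤ) ∣ (n : ℤ) * (7 - (n : ℤ)) ∧
    n % 6 ∈ ({0, 1, 3, 4} : Finset ℕ) := by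
  obtain ⟨h3, -, h2, -, -⟩ := hS
  have hE : edgesOn Finset.univ S = (Finset.univ : Finset (Fin n)).powersetCard 2 := by
    ext e
    simp only [edgesOn, mem_filter, mem_powerset, mem_powersetCard]
    constructor
    · rintro ⟨a, b, -⟩
      exact ⟨a, b⟩
    · rintro ⟨a, b⟩
      exact ⟨a, b, hnb e b⟩
  have hcE : (edgesOn Finset.univ S).card = n.choose 2 := by
    rw [hE, card_powersetCard, card_univ, Fintype.card_fin]
  -- double count incident edge/triangle pairs
  have key : (edgesOn Finset.univ S).card * 2 = S.card * 3 := by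
    apply Finset.card_mul_eq_card_mul (fun (e T : Finset (Fin n)) => e ⊆ T)
    · intro e he
      rw [hE, mem_powersetCard] at he
      exact h2 e he.2 (hnb e he.2)
    · intro T hT
      have : Finset.bipartiteBelow (fun (e T : Finset (Fin n)) => e ⊆ T)
          (edgesOn Finset.univ S) T = T.powersetCard 2 := by
        ext e
        simp only [Finset.bipartiteBelow, hE, mem_filter, mem_powersetCard, subset_univ, true_and]
        exact and_comm
      rw [this, card_powersetCard, (h3 T hT).1]
      rfl
  have hch : ((n.choose 2 : ℕ) : ℤ) * 2 = n * (n - 1) := by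
    have h' : n.choose 2 * 2 = n * (n - 1) := by
      rw [Nat.choose_two_right]
      exact Nat.div_mul_cancel (Nat.even_mul_pred_self n).two_dvd
    have := congrArg (Nat.cast : ℕ → ℤ) h'
    push_cast [Nat.cast_sub (show 1 ≤ n by omega)] at this
    exact this
  have hmain : 6 * eulerChar n S = (n : ℤ) * (7 - (n : ℤ)) := by
    simp only [eulerChar, eulerCharOn, card_univ, Fintype.card_fin]
    rw [hcE] at key ⊢
    have key' : ((n.choose 2 : ℕ) : ℤ) * 2 = (S.card : ℤ) * 3 := by exact_mod_cast key
    linarith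
  have hdvd : (6 : ℤ) ∣ (n : ℤ) * (7 - (n : ℤ)) := ⟨_, hmain.symm⟩
  refine ⟨hmain, hdvd, ?_⟩
  have hm := Int.emod_eq_zero_of_dvd hdvd
  have hlt : n % 6 < 6 := Nat.mod_lt _ (by norm_num)
  have hn6 : (n : ℤ) % 6 = ((n % 6 : ℕ) : ℤ) := by simp
  rw [Int.mul_emod, Int.sub_emod, hn6] at hm
  generalize n % 6 = r at hm hlt
  interval_cases r <;> simp_all
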